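/- Let X be a compact topological space, V a Banach space, and x ↦ A_x a map from X to L(V) that is continuous in the operator norm and such that every A_x is injective. Let k ≥ 1 and let x ↦ 𝓔(x) be a continuous map from X to the k-dimensional subspaces of V (continuous with respect to the Hausdorff metric d_H). Then there exists a constant c_𝓔 > 0 such that m(A_x|_{𝓔(x)}) > c_𝓔 for every x ∈ X. -/

import Mathlib

/-!
For a fixed `x`, the space `𝓔 x` is finite-dimensional and `A x` is injective, so `A x` is bounded
below by some `m > 0` on the unit sphere of `𝓔 x`. If `y` is close to `x`, every unit vector `v` of
`𝓔 y` is close to a unit vector `w` of `𝓔 x`, and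
`‖A y v‖ ≥ ‖A x w‖ - ‖A x‖ ‖w - v‖ - ‖A y - A x‖`, so `m / 2` is a lower bound on the unit spheres
of all `𝓔 y` with `y` near `x` (`eventually_lower_bound`). Compactness of `X` makes the bound uniform.
-/

open Metric Filter MeasureTheory Topology

noncomputable section

section Defs

variable {V W : Type*} [NormedAddCommGroup V] [NormedSpace ℝ V]
  [NormedAddCommGroup W] [NormedSpace ℝ W]

/-- The operator norm of the restriction of `A` to the subspace `E`, `‖A|_E‖`. -/
noncomputable def restrNorm (A : V →L[ℝ] W) (E : Submodule ℝ V) : ℝ :=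
  ‖A.comp E.subtypeL‖

/-- The minimal norm `m(A|_E) = inf {‖A v‖ : v ∈ E, ‖v‖ = 1}`. -/
noncomputable def minNorm (A : V →L[ℝ] W) (E : Submodule ℝ V) : ℝ :=
  sInf {r : ℝ | ∃ v ∈ E, ‖v‖ = 1 ∧ r = ‖A v‖}

/-- `F` is a closed subspace of codimension `n`. -/
def ClosedCodim (F : Submodule ℝ V) (n : ℕ) : Prop :=
  IsClosed (F : Set V) ∧ FiniteDimensional ℝ (V ⧸ F) ∧ Module.finrank ℝ (V ⧸ F) = n

/-- The `k`-th Gelfand number of `A` (meaningful for `k ≥ 1`):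
`c_k(A) = inf {‖A|_F‖ : F a closed subspace of codimension k - 1}`. -/
noncomputable def gelfand (k : ℕ) (A : V →L[ℝ] W) : ℝ :=
  sInf {r : ℝ | ∃ F : Submodule ℝ V, ClosedCodim F (k - 1) ∧ r = restrNorm A F}

/-- The unit sphere of a subspace. -/
def subSphere (E : Submodule ℝ V) : Set V := {v : V | v ∈ E ∧ ‖v‖ = 1}

/-- Hausdorff distance between the unit spheres of two subspaces. -/
noncomputable def dHaus (E F : Submodule ℝ V) : ℝ :=
  Metric.hausdorffDist (subSphere E) (subSphere F)

/-- `π` is the (bounded) projection onto `E` parallel to `F`. -/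
def IsProjOn (π : V →L[ℝ] V) (E F : Submodule ℝ V) : Prop :=
  (∀ v ∈ E, π v = v) ∧ (∀ v ∈ F, π v = 0)

open scoped Classical in
/-- The (unsigned) determinant `det(A|E)` of `A` restricted to a finite-dimensional
subspace `E`, defined as the ratio of the induced (Haar) volume of the image `A B_E`
of the unit ball of `E` to that of the unit ball of `A E`; it equals `0` when `A|_E`
is not injective.  (The value of the ratio does not depend on the choice of linear
equivalence with `ℝ^k`, since any two such differ by a linear automorphism, which
rescales both volumes by the same factor.) -/
noncomputable def detOn (A : V →L[ℝ] W) (E : Submodule ℝ V) : ℝ :=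
  if h : Nonempty ((↥(E.map A.toLinearMap)) ≃ₗ[ℝ] (Fin (Module.finrank ℝ ↥E) → ℝ)) then
    (volume (⇑h.some '' {w : ↥(E.map A.toLinearMap) | ∃ v ∈ E, ‖v‖ ≤ 1 ∧ A v = (w : W)})).toReal /
      (volume (⇑h.some '' {w : ↥(E.map A.toLinearMap) | ‖(w : W)‖ ≤ 1})).toReal
  else 0

/-- `V_k(A)`: the maximal `k`-dimensional volume growth of `A`,
`V_k(A) = sup {det(A|E) : E ⊆ V a k-dimensional subspace}`. -/
noncomputable def volGrowth (k : ℕ) (A : V →L[ℝ] W) : ℝ :=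
  sSup {r : ℝ | ∃ E : Submodule ℝ V, FiniteDimensional ℝ ↥E ∧ Module.finrank ℝ ↥E = k ∧
    r = detOn A E}

/-- `V_k(A|_G)`: maximal volume growth among `k`-dimensional subspaces of `G`. -/
noncomputable def volGrowthOn (k : ℕ) (A : V →L[ℝ] W) (G : Submodule ℝ V) : ℝ :=
  sSup {r : ℝ | ∃ E : Submodule ℝ V, E ≤ G ∧ FiniteDimensional ℝ ↥E ∧
    Module.finrank ℝ ↥E = k ∧ r = detOn A E}

/-- `A : X × ℕ → L(V)` is a linear cocycle over `T`. -/
def IsCocycle {X : Type*} (T : X → X) (A : X → ℕ → (V →L[ℝ] V)) : Prop :=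
  (∀ x, A x 0 = 1) ∧ ∀ x n m, A x (n + m) = (A (T^[m] x) n).comp (A x m)

/-- Continuity of a subspace-valued map with respect to the Hausdorff distance
between unit spheres. -/
def SubContinuous {X : Type*} [TopologicalSpace X] (𝓔 : X → Submodule ℝ V) : Prop :=
  ∀ x : X, ∀ ε > (0 : ℝ), ∀ᶠ y in nhds x, dHaus (𝓔 x) (𝓔 y) < ε

end Defs

end
section Local

variable {V W : Type*} [NormedAddCommGroup V] [NormedSpace ℝ V]
  [NormedAddCommGroup W] [NormedSpace ℝ W]

theorem subSphere_nonempty {E : Submodule ℝ V} (hE : 1 ≤ Module.finrank ℝ E) :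
    (subSphere E).Nonempty := by
  have : Nontrivial E := Module.nontrivial_of_finrank_pos (R := ℝ) hE
  obtain ⟨v, hv⟩ := exists_norm_eq E (zero_le_one' ℝ)
  exact ⟨v, v.2, by simpa using hv⟩

theorem isBounded_subSphere (E : Submodule ℝ V) : Bornology.IsBounded (subSphere E) :=
  isBounded_iff_forall_norm_le.2 ⟨1, fun _ hv => hv.2.le⟩

theorem exists_lower_bound_of_injective (A : V →L[ℝ] W) (hA : Function.Injective A)
    (E : Submodule ℝ V) [FiniteDimensional ℝ E] :
    ∃ m > (0 : ℝ), ∀ v ∈ subSphere E, m ≤ ‖A v‖ := by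
  have hker : (A.toLinearMap.comp E.subtype).ker = ⊥ :=
    LinearMap.ker_eq_bot.2 (hA.comp E.injective_subtype)
  obtain ⟨K, hK, hanti⟩ := LinearMap.exists_antilipschitzWith _ hker
  have hK' : (0 : ℝ) < K := hK
  refine ⟨(K : ℝ)⁻¹, inv_pos.2 hK', fun v hv => ?_⟩
  have h := hanti.le_mul_dist ⟨v, hv.1⟩ 0
  simp only [dist_zero_right, map_zero] at h
  change ‖v‖ ≤ K * ‖A v‖ at h
  rw [hv.2] at h
  exact (inv_le_iff_one_le_mul₀' hK').2 h

/-- The lower bound at `x` persists, up to a factor `1 / 2`, on a neighbourhood of `x`. -/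
theorem eventually_lower_bound {X : Type*} [TopologicalSpace X] {A : X → (V →L[ℝ] W)}
    (hA : Continuous A) (hinj : ∀ x, Function.Injective (A x)) {𝓔 : X → Submodule ℝ V}
    (h𝓔 : SubContinuous 𝓔) (hfin : ∀ x, FiniteDimensional ℝ (𝓔 x))
    (hpos : ∀ x, 1 ≤ Module.finrank ℝ (𝓔 x)) (x : X) :
    ∃ c > (0 : ℝ), ∀ᶠ y in 𝓝 x, ∀ v ∈ subSphere (𝓔 y), c ≤ ‖A y v‖ := by
  have := hfin x
  obtain ⟨m, hm, hlow⟩ := exists_lower_bound_of_injective (A x) (hinj x) (𝓔 x)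
  -- `ε` is chosen so that `‖A x‖ * ε ≤ m / 4`.
  set ε : ℝ := m / (4 * (‖A x‖ + 1)) with hε
  have hN : 0 < ‖A x‖ + 1 := by positivity
  have hεpos : 0 < ε := by positivity
  have hεm : (‖A x‖ + 1) * ε = m / 4 := by
    rw [hε]
    field_simp
  refine ⟨m / 2, by positivity, ?_⟩
  filter_upwards [h𝓔 x ε hεpos,
    hA.continuousAt.eventually (Metric.ball_mem_nhds (A x) (by positivity : 0 < m / 4))]
    with y hy hAy v hv
  obtain ⟨w, hw, hwv⟩ := Metric.exists_dist_lt_of_hausdorffDist_lt' hv hy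
    (Metric.hausdorffEDist_ne_top_of_nonempty_of_bounded (subSphere_nonempty (hpos x))
      (subSphere_nonempty (hpos y)) (isBounded_subSphere _) (isBounded_subSphere _))
  have h1 : ‖A x (w - v)‖ ≤ m / 4 := by
    rw [dist_eq_norm] at hwv
    have := (A x).le_opNorm (w - v)
    nlinarith [norm_nonneg (A x), norm_nonneg (w - v)]
  have h2 : ‖(A y - A x) v‖ ≤ m / 4 := by
    have := (A y - A x).le_opNorm v
    rw [hv.2, mul_one, ← dist_eq_norm] at this
    exact this.trans (Metric.mem_ball.1 hAy).le
  have h3 : A x w = A y v + A x (w - v) - (A y - A x) v := by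
    simp only [map_sub, sub_apply]
    abel
  have h4 : ‖A x w‖ ≤ ‖A y v‖ + ‖A x (w - v)‖ + ‖(A y - A x) v‖ := by
    rw [h3]
    exact (norm_sub_le _ _).trans (by gcongr; exact norm_add_le _ _)
  linarith [hlow w hw]

end Local

/-- **Corollary 3.4 (uniform lower bound on the minimal norm over a continuous
finite-dimensional distribution).** -/
theorem uniform_minNorm_lower_bound
    {X V : Type*} [TopologicalSpace X] [CompactSpace X]
    [NormedAddCommGroup V] [NormedSpace ℝ V] [CompleteSpace V]
    (A : X → (V →L[ℝ] V))
    (hA : Continuous A)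
    (hinj : ∀ x, Function.Injective (A x))
    (k : ℕ) (hk : 1 ≤ k)
    (𝓔 : X → Submodule ℝ V)
    (h𝓔 : SubContinuous 𝓔)
    (hdim : ∀ x, FiniteDimensional ℝ ↥(𝓔 x) ∧ Module.finrank ℝ ↥(𝓔 x) = k) :
    ∃ c > (0:ℝ), ∀ x : X, c < minNorm (A x) (𝓔 x) := by
  have hpos : ∀ x, 1 ≤ Module.finrank ℝ (𝓔 x) := fun x => (hdim x).2 ▸ hk
  obtain ⟨c, hc, hlow⟩ : ∃ c > (0 : ℝ), ∀ x ∈ (Set.univ : Set X),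
      ∀ v ∈ subSphere (𝓔 x), c ≤ ‖A x v‖ := by
    refine isCompact_univ.induction_on
      (p := fun s => ∃ c > (0 : ℝ), ∀ x ∈ s, ∀ v ∈ subSphere (𝓔 x), c ≤ ‖A x v‖)
      ⟨1, one_pos, by simp⟩ ?_ ?_ ?_
    · rintro s t hst ⟨c, hc, h⟩
      exact ⟨c, hc, fun x hx => h x (hst hx)⟩
    · rintro s t ⟨c, hc, h⟩ ⟨d, hd, h'⟩
      refine ⟨min c d, lt_min hc hd, ?_⟩
      rintro x (hx | hx) v hv
      · exact (min_le_left _ _).trans (h x hx v hv)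
      · exact (min_le_right _ _).trans (h' x hx v hv)
    · intro x _
      obtain ⟨c, hc, h⟩ := eventually_lower_bound hA hinj h𝓔 (fun x => (hdim x).1) hpos x
      exact ⟨_, mem_nhdsWithin_of_mem_nhds h, c, hc, fun y hy => hy⟩
  refine ⟨c / 2, half_pos hc, fun x => (half_lt_self hc).trans_le ?_⟩
  -- Non-emptiness of the unit sphere rules out the junk value `sInf ∅ = 0`.
  obtain ⟨v, hv⟩ := subSphere_nonempty (hpos x)
  refine le_csInf ⟨‖A x v‖, v, hv.1, hv.2, rfl⟩ ?_
  rintro r ⟨u, hu, hu1, rfl⟩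
  exact hlow x (Set.mem_univ x) u ⟨hu, hu1⟩
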